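/- arXiv:1704.00335 — 3 statements merged into one kernel-verified Lean document; each statement's English description precedes it below -/
import Mathlib

section
/- Let k be a field, let (L, K, M) be a field correspondence over k (so M/L and M/K are finite and separable), and let Ω be an algebraically closed field containing M. If L ∩ K has transcendence degree 1 over k (the correspondence has a core), then there exists a subfield E of Ω containing M with [E : M] finite such that E is Galois over L and E is Galois over K. -/
/-- A field extension `F/k` has transcendence degree one iff some single element
forms a transcendence basis of `F` over `k`. -/
def HasTrdegOne (k F : Type*) [Field k] [Field F] [Algebra k F] : Prop :=
  ∃ x : F, IsTranscendenceBasis k (fun _ : Unit => x)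

/-- For subfields `B ≤ E` of `Ω`, the extension `E/B` is Galois. -/
def IsGaloisOver {k Ω : Type*} [Field k] [Field Ω] [Algebra k Ω]
    (B E : IntermediateField k Ω) : Prop :=
  ∃ h : B ≤ E, IsGalois B (IntermediateField.extendScalars h)

/-- For subfields `B ≤ E` of `Ω`, the extension `E/B` is finite. -/
def IsFiniteOver {k Ω : Type*} [Field k] [Field Ω] [Algebra k Ω]
    (B E : IntermediateField k Ω) : Prop :=
  ∃ h : B ≤ E, FiniteDimensional B (IntermediateField.extendScalars h)

/-!
Write `C = L ⊓ K`. Comparing transcendence degrees, `M` is algebraic, hence finite, over `C`.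
The separable closure `N` of `M` is Galois over both `L` and `K`, so an element of `N` fixed by
every `C`-automorphism lies in `L` and in `K`, that is, in `C`. By Artin's argument an algebraic
extension whose automorphisms fix only the base field is separable: each element is a root of the
product of `X - y` over its finite orbit. Therefore `M` is separable over `C`, and the normal
closure of `M` over `C` is finite and Galois over `C`, hence Galois over `L` and over `K`.
-/

section Invariant

variable {F N : Type*} [Field F] [Field N] [Algebra F N]

open Polynomial in
lemma isSeparable_of_finite_orbit (G : Type*) [Group G] [MulSemiringAction G N]
    [Algebra.IsInvariant F N G] {x : N} (hx : (MulAction.orbit G x).Finite) :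
    IsSeparable F x := by
  let _ : Fintype (MulAction.orbit G x) := hx.fintype
  let P : N[X] := ∏ y : MulAction.orbit G x, (X - C (y : N))
  have smul_P (g : G) : g • P = P := by
    rw [Finset.smul_prod']
    refine Fintype.prod_equiv (MulAction.toPerm g) _ _ fun y => ?_
    simp only [smul_sub, smul_X, smul_C, MulAction.toPerm_apply, MulAction.orbit.coe_smul]
  have P_lifts : P ∈ lifts (algebraMap F N) := by
    refine (lifts_iff_coeff_lifts P).2 fun n => ?_
    refine Algebra.IsInvariant.isInvariant (G := G) (P.coeff n) fun g => ?_
    rw [← coeff_smul, smul_P]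
  obtain ⟨Q, Q_map⟩ := (mem_lifts P).1 P_lifts
  have Q_separable : Q.Separable := by
    rw [← separable_map (algebraMap F N), Q_map]
    exact separable_prod_X_sub_C_iff.2 Subtype.val_injective
  have aeval_Q : aeval x Q = 0 := by
    rw [aeval_def, ← eval_map, Q_map, eval_prod]
    exact Finset.prod_eq_zero (Finset.mem_univ ⟨x, MulAction.mem_orbit_self x⟩) (by simp)
  exact Q_separable.of_dvd (minpoly.dvd F x aeval_Q)

lemma finite_orbit_algEquiv {x : N} (hx : IsIntegral F x) :
    (MulAction.orbit Gal(N/F) x).Finite := by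
  refine ((minpoly F x).rootSet_finite N).subset ?_
  rintro _ ⟨σ, rfl⟩
  refine (Polynomial.mem_rootSet_of_ne (minpoly.ne_zero hx)).2 ?_
  exact minpoly.aeval_algHom F (σ : N →ₐ[F] N) x

lemma isSeparable_of_isInvariant_algEquiv [Algebra.IsAlgebraic F N]
    [Algebra.IsInvariant F N Gal(N/F)] : Algebra.IsSeparable F N :=
  ⟨fun x => isSeparable_of_finite_orbit Gal(N/F) <|
    finite_orbit_algEquiv (Algebra.IsIntegral.isIntegral x)⟩

end Invariant

section Intersection

variable {k M : Type*} [Field k] [Field M] [Algebra k M]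

lemma exists_algebraMap_eq_of_fixed {N : Type*} [Field N] [Algebra M N]
    {F J : IntermediateField k M} [IsGalois J N] (hFJ : F ≤ J) {x : N}
    (hx : ∀ σ : Gal(N/F), σ x = x) : ∃ y ∈ J, algebraMap M N y = x := by
  obtain ⟨y, hy⟩ := (InfiniteGalois.mem_range_algebraMap_iff_fixed (k := J) x).2 fun σ =>
    hx { σ with commutes' := fun r => σ.commutes ⟨r, hFJ r.2⟩ }
  exact ⟨y, y.2, hy⟩

lemma isInvariant_inf (L K : IntermediateField k M) (N : Type*) [Field N] [Algebra M N]
    [IsGalois L N] [IsGalois K N] : Algebra.IsInvariant ↥(L ⊓ K) N Gal(N/↥(L ⊓ K)) where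
  isInvariant x hx := by
    obtain ⟨y, hyL, rfl⟩ := exists_algebraMap_eq_of_fixed inf_le_left hx
    obtain ⟨z, hzK, hzy⟩ := exists_algebraMap_eq_of_fixed inf_le_right hx
    obtain rfl : z = y := (algebraMap M N).injective hzy
    exact ⟨⟨z, hyL, hzK⟩, rfl⟩

lemma isSepClosure_of_isSeparable {F E : Type*} (N : Type*) [Field F] [Field E] [Field N]
    [Algebra F E] [Algebra F N] [Algebra E N] [IsScalarTower F E N] [Algebra.IsSeparable F E]
    [IsSepClosure E N] : IsSepClosure F N where
  sep_closed := IsSepClosure.sep_closed E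
  separable :=
    have : Algebra.IsSeparable E N := IsSepClosure.separable
    .trans F E N

lemma isSeparable_inf (L K : IntermediateField k M) [Algebra.IsSeparable L M]
    [Algebra.IsSeparable K M] [Algebra.IsAlgebraic ↥(L ⊓ K) M] :
    Algebra.IsSeparable ↥(L ⊓ K) M := by
  have : Algebra.IsAlgebraic ↥(L ⊓ K) (SeparableClosure M) := .trans _ M _
  have : IsSepClosure L (SeparableClosure M) := isSepClosure_of_isSeparable (E := M) _
  have : IsSepClosure K (SeparableClosure M) := isSepClosure_of_isSeparable (E := M) _
  have := isInvariant_inf L K (SeparableClosure M)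
  have : Algebra.IsSeparable ↥(L ⊓ K) (SeparableClosure M) := isSeparable_of_isInvariant_algEquiv
  exact Algebra.isSeparable_tower_bot_of_isSeparable _ M (SeparableClosure M)

end Intersection

section TranscendenceDegree

lemma isAlgebraic_of_algebraicIndependent_of_isTranscendenceBasis {ι k F M : Type*} [Finite ι]
    [CommRing k] [CommRing F] [IsDomain F] [CommRing M] [IsDomain M] [Algebra k F] [Algebra k M]
    [Algebra F M] [IsScalarTower k F M] [FaithfulSMul F M]
    {x : ι → F} {t : ι → M} (hx : AlgebraicIndependent k x) (ht : IsTranscendenceBasis k t) :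
    Algebra.IsAlgebraic F M := by
  have : Nontrivial k := (algebraMap k M).domain_nontrivial
  have hx_indep : AlgebraicIndependent k (algebraMap F M ∘ x) :=
    hx.map' (f := IsScalarTower.toAlgHom k F M) (FaithfulSMul.algebraMap_injective F M)
  have hx_basis : IsTranscendenceBasis k (algebraMap F M ∘ x) :=
    hx_indep.isTranscendenceBasis_of_lift_trdeg_le_of_finite ht.lift_cardinalMk_eq_trdeg.ge
  exact hx_basis.isAlgebraic_iff.2 fun i => isAlgebraic_algebraMap (x i)

lemma finiteDimensional_of_hasTrdegOne {k M : Type*} [Field k] [Field M] [Algebra k M]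
    (hfg : (⊤ : IntermediateField k M).FG) (hM : HasTrdegOne k M) {F : IntermediateField k M}
    (hF : HasTrdegOne k F) : FiniteDimensional F M := by
  obtain ⟨x, hx⟩ := hF
  obtain ⟨t, ht⟩ := hM
  have : Algebra.IsAlgebraic F M :=
    isAlgebraic_of_algebraicIndependent_of_isTranscendenceBasis hx.1 ht
  have : Algebra.EssFiniteType k M := IntermediateField.fg_top_iff.1 hfg
  have : Algebra.EssFiniteType F M := .of_comp k F M
  exact Algebra.finite_of_essFiniteType_of_isAlgebraic

end TranscendenceDegree

lemma isGalois_normalClosure {F M Ω : Type*} [Field F] [Field M] [Field Ω] [Algebra F M]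
    [Algebra F Ω] [Algebra.IsSeparable F M]
    (splits : ∀ x : M, ((minpoly F x).map (algebraMap F Ω)).Splits) :
    IsGalois F (IntermediateField.normalClosure F M Ω) where
  to_isSeparable := by
    rw [← le_separableClosure_iff, normalClosure_le_iff]
    intro f
    rw [le_separableClosure_iff]
    exact AlgEquiv.Algebra.isSeparable (AlgEquiv.ofInjectiveField f)
  to_normal := (Algebra.IsAlgebraic.isNormalClosure_normalClosure splits).normal

section Subfields

variable {k Ω : Type*} [Field k] [Field Ω] [Algebra k Ω] {A B E : IntermediateField k Ω}

lemma IsFiniteOver.of_le_of_le (h : IsFiniteOver A E) (hAB : A ≤ B) (hBE : B ≤ E) :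
    IsFiniteOver B E := by
  obtain ⟨hAE, finite_E⟩ := h
  let : Algebra A B := (IntermediateField.inclusion hAB).toAlgebra
  let : Algebra A (IntermediateField.extendScalars hBE) :=
    inferInstanceAs (Algebra A (IntermediateField.extendScalars hAE))
  have : IsScalarTower A B (IntermediateField.extendScalars hBE) := .of_algebraMap_eq fun _ => rfl
  have : FiniteDimensional A (IntermediateField.extendScalars hBE) := finite_E
  exact ⟨hBE, .right A B _⟩

lemma IsGaloisOver.of_le_of_le (h : IsGaloisOver A E) (hAB : A ≤ B) (hBE : B ≤ E) :
    IsGaloisOver B E := by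
  obtain ⟨hAE, galois_E⟩ := h
  let : Algebra A B := (IntermediateField.inclusion hAB).toAlgebra
  let : Algebra A (IntermediateField.extendScalars hBE) :=
    inferInstanceAs (Algebra A (IntermediateField.extendScalars hAE))
  have : IsScalarTower A B (IntermediateField.extendScalars hBE) := .of_algebraMap_eq fun _ => rfl
  have : IsGalois A (IntermediateField.extendScalars hBE) := galois_E
  exact ⟨hBE, .tower_top_of_isGalois A B _⟩

end Subfields

section Restrict

variable {k M Ω : Type*} [Field k] [Field M] [Field Ω] [Algebra k M] [Algebra k Ω] [Algebra M Ω]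
  [IsScalarTower k M Ω] (F : IntermediateField k M) (E : IntermediateField F Ω)

lemma map_toAlgHom_le_restrictScalars :
    F.map (IsScalarTower.toAlgHom k M Ω) ≤ E.restrictScalars k := by
  rintro _ ⟨y, hy, rfl⟩
  exact E.algebraMap_mem ⟨y, hy⟩

lemma isFiniteOver_map_restrictScalars [FiniteDimensional F E] :
    IsFiniteOver (F.map (IsScalarTower.toAlgHom k M Ω)) (E.restrictScalars k) := by
  refine ⟨map_toAlgHom_le_restrictScalars F E, ?_⟩
  exact Module.Finite.of_equiv_equiv (A₁ := F) (B₁ := E)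
    (F.equivMap (IsScalarTower.toAlgHom k M Ω)).toRingEquiv (RingEquiv.refl E) rfl

lemma isGaloisOver_map_restrictScalars [IsGalois F E] :
    IsGaloisOver (F.map (IsScalarTower.toAlgHom k M Ω)) (E.restrictScalars k) := by
  refine ⟨map_toAlgHom_le_restrictScalars F E, ?_⟩
  exact IsGalois.of_equiv_equiv (F := F) (E := E)
    (f := (F.equivMap (IsScalarTower.toAlgHom k M Ω)).toRingEquiv) (g := RingEquiv.refl E) rfl

end Restrict

theorem exists_biGalois_extension_of_has_core_general
    {k M : Type*} [Field k] [Field M] [Algebra k M] (L K : IntermediateField k M)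
    [FiniteDimensional ↥(L ⊓ K) M] [Algebra.IsSeparable L M] [Algebra.IsSeparable K M]
    (Ω : Type*) [Field Ω] [Algebra k Ω] [Algebra M Ω] [IsScalarTower k M Ω]
    (splits : ∀ x : M, ((minpoly ↥(L ⊓ K) x).map (algebraMap ↥(L ⊓ K) Ω)).Splits) :
    ∃ E : IntermediateField k Ω,
      (IsScalarTower.toAlgHom k M Ω).fieldRange ≤ E ∧
      IsFiniteOver (IsScalarTower.toAlgHom k M Ω).fieldRange E ∧
      IsGaloisOver (L.map (IsScalarTower.toAlgHom k M Ω)) E ∧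
      IsGaloisOver (K.map (IsScalarTower.toAlgHom k M Ω)) E := by
  have : Algebra.IsSeparable ↥(L ⊓ K) M := isSeparable_inf L K
  let E := IntermediateField.normalClosure ↥(L ⊓ K) M Ω
  have : IsGalois ↥(L ⊓ K) E := isGalois_normalClosure splits
  have range_le : (IsScalarTower.toAlgHom k M Ω).fieldRange ≤ E.restrictScalars k :=
    (IsScalarTower.toAlgHom ↥(L ⊓ K) M Ω).fieldRange_le_normalClosure
  have map_le (J : IntermediateField k M) :
      J.map (IsScalarTower.toAlgHom k M Ω) ≤ (IsScalarTower.toAlgHom k M Ω).fieldRange :=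
    fun _ ⟨y, _, hy⟩ => ⟨y, hy⟩
  have finite_core := isFiniteOver_map_restrictScalars (L ⊓ K) E
  have galois_core := isGaloisOver_map_restrictScalars (L ⊓ K) E
  exact ⟨E.restrictScalars k, range_le, finite_core.of_le_of_le (map_le _) range_le,
    galois_core.of_le_of_le (IntermediateField.map_mono _ inf_le_left) ((map_le L).trans range_le),
    galois_core.of_le_of_le (IntermediateField.map_mono _ inf_le_right) ((map_le K).trans range_le)⟩

/-- converse direction of Lemma `No_Galois`.
If the field correspondence `L ⊆ M ⊇ K` over `k` has a core, then inside any algebraically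
closed field `Ω ⊇ M` there is a finite extension `E` of `M` which is Galois over both
`L` and `K`. -/
theorem exists_biGalois_extension_of_has_core
    (k M : Type*) [Field k] [Field M] [Algebra k M]
    -- `M` is a finitely generated field extension of `k` of transcendence degree 1
    (hfg : (⊤ : IntermediateField k M).FG)
    (htr : HasTrdegOne k M)
    -- the two intermediate fields `L` and `K`, with `M/L` and `M/K` finite and separable
    (L K : IntermediateField k M)
    [FiniteDimensional L M] [FiniteDimensional K M]
    [Algebra.IsSeparable L M] [Algebra.IsSeparable K M]
    -- the correspondence has a core
    (hcore : HasTrdegOne k ↥(L ⊓ K))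
    -- an algebraically closed field `Ω` containing `M`
    (Ω : Type*) [Field Ω] [Algebra k Ω] [Algebra M Ω] [IsScalarTower k M Ω]
    [IsAlgClosed Ω] :
    ∃ E : IntermediateField k Ω,
      (IsScalarTower.toAlgHom k M Ω).fieldRange ≤ E ∧
      IsFiniteOver (IsScalarTower.toAlgHom k M Ω).fieldRange E ∧
      IsGaloisOver (L.map (IsScalarTower.toAlgHom k M Ω)) E ∧
      IsGaloisOver (K.map (IsScalarTower.toAlgHom k M Ω)) E := by
  have : FiniteDimensional ↥(L ⊓ K) M := finiteDimensional_of_hasTrdegOne hfg htr hcore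
  exact exists_biGalois_extension_of_has_core_general L K Ω fun _ => IsAlgClosed.splits _
end

section
/- Let k be a field, let (L, K, M) be a field correspondence over k, let Ω be an algebraically closed field extension of k of transcendence degree 1, and fix a k-algebra embedding PQ : M → Ω with restrictions P = PQ|_L and Q = PQ|_K. Let E_∞ ⊆ Ω be the union of the alternating tower of Galois closures: E_1 the Galois closure of PQ(M) over Q(K) inside Ω, E_2 the Galois closure of E_1 over P(L) inside Ω, and so on alternately. Then E_∞ is Galois (normal and separable, possibly infinite) over P(L) and over Q(K), and for every subfield F of Ω containing PQ(M) such that F is Galois over P(L) and Galois over Q(K), one has E_∞ ⊆ F. In other words, E_∞ is the minimal subfield of Ω containing PQ(M) that is Galois over both P(L) and Q(K). -/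
/-- The Galois (= normal) closure inside `Ω` of the subfield `F` over the subfield `B`:
the compositum of the images of `F` under all `k`-algebra endomorphisms of `Ω`
fixing `B` pointwise. -/
noncomputable def galoisClosureOver {k Ω : Type*} [Field k] [Field Ω] [Algebra k Ω]
    (B F : IntermediateField k Ω) : IntermediateField k Ω :=
  ⨆ σ : {σ : Ω →ₐ[k] Ω // ∀ x ∈ B, σ x = x}, F.map σ.1

/-- The alternating tower of Galois closures: `altTower B₁ B₂ F₀ (n+1)` is the Galois
closure of `altTower B₁ B₂ F₀ n` over `B₁` (for even `n`), resp. over `B₂` (for odd `n`),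
starting from `F₀`. -/
noncomputable def altTower {k Ω : Type*} [Field k] [Field Ω] [Algebra k Ω]
    (B₁ B₂ F₀ : IntermediateField k Ω) : ℕ → IntermediateField k Ω
  | 0 => F₀
  | n + 1 => galoisClosureOver (if n % 2 = 0 then B₁ else B₂) (altTower B₁ B₂ F₀ n)

/-!
Inside an algebraically closed field `Ω`, a subfield `E ≥ B` is Galois over `B` exactly when it lies
in the separable closure of `B` and is stable under every `B`-endomorphism of `Ω`. Since
`galoisClosureOver` commutes with unions, it sends the union of the tower into itself over either
base, so the union is stable. If `F₀` is separable over both `B₁` and `B₂`, then these have the same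
separable closure in `Ω`, namely that of `F₀`. It is Galois over both bases, so minimality of the
union places the union inside it, which gives separability.
-/

theorem exists_algEquiv_comp_eq {F E Ω Ω' ι : Type*} [Field F] [Field E] [Field Ω] [Field Ω']
    [Algebra F E] [Algebra F Ω] [Algebra F Ω'] [Algebra.IsAlgebraic F E]
    [IsAlgClosed Ω] [IsAlgClosed Ω'] {v : ι → Ω} {w : ι → Ω'}
    (hv : IsTranscendenceBasis F v) (hw : IsTranscendenceBasis F w)
    (φ : E →ₐ[F] Ω) (ψ : E →ₐ[F] Ω') :
    ∃ σ : Ω ≃ₐ[F] Ω', (σ : Ω →ₐ[F] Ω').comp φ = ψ := by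
  algebraize [φ.toRingHom, ψ.toRingHom]
  have : IsScalarTower F E Ω := .of_algebraMap_eq fun x => (φ.commutes x).symm
  have : IsScalarTower F E Ω' := .of_algebraMap_eq fun x => (ψ.commutes x).symm
  -- `v` and `w` remain transcendence bases over `E`, so the two fields are algebraic closures of
  -- the isomorphic polynomial rings `E[v]` and `E[w]`.
  have hvE := (Algebra.IsAlgebraic.isTranscendenceBasis_iff F E).mp hv
  have hwE := (Algebra.IsAlgebraic.isTranscendenceBasis_iff F E).mp hw
  have := IsAlgClosed.isAlgClosure_of_transcendence_basis v hvE
  have := IsAlgClosed.isAlgClosure_of_transcendence_basis w hwE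
  let e : Algebra.adjoin E (Set.range v) ≃ₐ[E] Algebra.adjoin E (Set.range w) :=
    hvE.1.aevalEquiv.symm.trans hwE.1.aevalEquiv
  let σ : Ω ≃+* Ω' := IsAlgClosure.equivOfEquiv Ω Ω' e.toRingEquiv
  have hσ (x : E) : σ (φ x) = ψ x :=
    (IsAlgClosure.equivOfEquiv_algebraMap Ω Ω' e.toRingEquiv (algebraMap E _ x)).trans
      congr($(e.commutes x))
  refine ⟨.ofRingEquiv (f := σ) fun x => ?_, AlgHom.ext hσ⟩
  rw [← φ.commutes, hσ, ψ.commutes]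

-- `Ω` may be transcendental over `F`, unlike in `IntermediateField.normal_iff_forall_map_le`.
theorem normal_iff_forall_map_le_of_isAlgClosed {F Ω : Type*} [Field F] [Field Ω] [Algebra F Ω]
    [IsAlgClosed Ω] (E : IntermediateField F Ω) [Algebra.IsAlgebraic F E] :
    Normal F E ↔ ∀ σ : Ω →ₐ[F] Ω, E.map σ ≤ E := by
  refine ⟨fun _ σ => ?_, fun hE => ?_⟩
  · rw [← E.fieldRange_comp_val, AlgHom.fieldRange_of_normal]
  have fieldRange_le (φ : E →ₐ[F] Ω) : φ.fieldRange ≤ E := by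
    obtain ⟨s, hs⟩ := exists_isTranscendenceBasis F Ω
    obtain ⟨σ, rfl⟩ := exists_algEquiv_comp_eq hs hs E.val φ
    rw [E.fieldRange_comp_val]
    exact hE σ
  have normalClosure_eq : IntermediateField.normalClosure F E Ω = E :=
    (normalClosure_le_iff.mpr fieldRange_le).antisymm E.le_normalClosure
  have : IsNormalClosure F E (IntermediateField.normalClosure F E Ω) :=
    Algebra.IsAlgebraic.isNormalClosure_normalClosure fun _ => IsAlgClosed.splits _
  rw [← normalClosure_eq]
  exact IsNormalClosure.normal (K := E)

theorem map_le_fieldRange {k M Ω : Type*} [Field k] [Field M] [Field Ω] [Algebra k M] [Algebra k Ω]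
    (L : IntermediateField k M) (f : M →ₐ[k] Ω) : L.map f ≤ f.fieldRange :=
  f.fieldRange_eq_map ▸ IntermediateField.map_mono f le_top

theorem fieldRange_le_separableClosure_map {k M Ω : Type*} [Field k] [Field M] [Field Ω]
    [Algebra k M] [Algebra k Ω] (L : IntermediateField k M) [Algebra.IsSeparable L M]
    (f : M →ₐ[k] Ω) : f.fieldRange ≤ (separableClosure (L.map f) Ω).restrictScalars k := by
  have : Algebra.IsSeparable (L.map f) (IntermediateField.extendScalars (map_le_fieldRange L f)) :=
    .of_equiv_equiv (L.equivMap f).toRingEquiv (AlgEquiv.ofInjectiveField f).toRingEquiv rfl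
  exact le_separableClosure _ _ (IntermediateField.extendScalars (map_le_fieldRange L f))

section GaloisClosure

variable {k Ω : Type*} [Field k] [Field Ω] [Algebra k Ω]

theorem restrictScalars_separableClosure_eq {B F : IntermediateField k Ω} (hBF : B ≤ F)
    (hF : F ≤ (separableClosure B Ω).restrictScalars k) :
    (separableClosure B Ω).restrictScalars k = (separableClosure F Ω).restrictScalars k :=
  ((separableClosureOperator k Ω).monotone hBF).antisymm
    ((separableClosure_le_separableClosure_iff k Ω B).mpr hF)

theorem galoisClosureOver_le_iff {B F E : IntermediateField k Ω} :
    galoisClosureOver B F ≤ E ↔ ∀ σ : Ω →ₐ[B] Ω, F.map (σ.restrictScalars k) ≤ E := by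
  rw [galoisClosureOver, iSup_le_iff, Subtype.forall]
  refine ⟨fun h σ => h (σ.restrictScalars k) fun x hx => σ.commutes ⟨x, hx⟩, fun h σ hσ => ?_⟩
  exact h { σ with commutes' := fun b => hσ b b.2 }

theorem le_galoisClosureOver (B F : IntermediateField k Ω) : F ≤ galoisClosureOver B F :=
  F.map_id.ge.trans (galoisClosureOver_le_iff.mp le_rfl (AlgHom.id B Ω))

theorem galoisClosureOver_mono (B : IntermediateField k Ω) : Monotone (galoisClosureOver B) :=
  fun _ _ h => iSup_mono fun σ => IntermediateField.map_mono σ.1 h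

theorem galoisClosureOver_iSup {ι : Sort*} (B : IntermediateField k Ω)
    (F : ι → IntermediateField k Ω) :
    galoisClosureOver B (⨆ i, F i) = ⨆ i, galoisClosureOver B (F i) := by
  simp only [galoisClosureOver, IntermediateField.map_iSup]
  exact iSup_comm

theorem isGaloisOver_iff [IsAlgClosed Ω] {B E : IntermediateField k Ω} (h : B ≤ E) :
    IsGaloisOver B E ↔
      E ≤ (separableClosure B Ω).restrictScalars k ∧ galoisClosureOver B E ≤ E := by
  have separable_iff : E ≤ (separableClosure B Ω).restrictScalars k ↔
      Algebra.IsSeparable B (IntermediateField.extendScalars h) :=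
    le_separableClosure_iff B Ω (IntermediateField.extendScalars h)
  rw [IsGaloisOver, exists_prop_of_true h, isGalois_iff, separable_iff]
  refine and_congr_right fun _ => ?_
  rw [normal_iff_forall_map_le_of_isAlgClosed, galoisClosureOver_le_iff]
  rfl

theorem isGaloisOver_separableClosure [IsSepClosed Ω] (B : IntermediateField k Ω) :
    IsGaloisOver B ((separableClosure B Ω).restrictScalars k) :=
  ⟨le_restrictScalars_separableClosure B, (separableClosure.isSepClosure B Ω).isGalois⟩

end GaloisClosure

section AltTower

variable {k Ω : Type*} [Field k] [Field Ω] [Algebra k Ω]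

theorem altTower_monotone (B₁ B₂ F₀ : IntermediateField k Ω) : Monotone (altTower B₁ B₂ F₀) :=
  monotone_nat_of_le_succ fun _ => le_galoisClosureOver _ _

theorem altTower_le {B₁ B₂ F₀ E : IntermediateField k Ω} (h₀ : F₀ ≤ E)
    (h₁ : galoisClosureOver B₁ E ≤ E) (h₂ : galoisClosureOver B₂ E ≤ E) (n : ℕ) :
    altTower B₁ B₂ F₀ n ≤ E := by
  induction n with
  | zero => exact h₀
  | succ n ih =>
    rw [altTower]
    split_ifs
    · exact (galoisClosureOver_mono B₁ ih).trans h₁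
    · exact (galoisClosureOver_mono B₂ ih).trans h₂

theorem galoisClosureOver_left_altTower_le (B₁ B₂ F₀ : IntermediateField k Ω) (n : ℕ) :
    galoisClosureOver B₁ (altTower B₁ B₂ F₀ n) ≤ altTower B₁ B₂ F₀ (2 * n + 1) := by
  rw [altTower, if_pos (by lia)]
  exact galoisClosureOver_mono B₁ (altTower_monotone B₁ B₂ F₀ (by lia))

theorem galoisClosureOver_right_altTower_le (B₁ B₂ F₀ : IntermediateField k Ω) (n : ℕ) :
    galoisClosureOver B₂ (altTower B₁ B₂ F₀ n) ≤ altTower B₁ B₂ F₀ (2 * n + 2) := by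
  rw [altTower, if_neg (by lia)]
  exact galoisClosureOver_mono B₂ (altTower_monotone B₁ B₂ F₀ (by lia))

end AltTower

theorem altTower_union_minimal_biGalois_general {k Ω : Type*} [Field k] [Field Ω] [Algebra k Ω]
    [IsAlgClosed Ω] {B₁ B₂ F₀ : IntermediateField k Ω} (hB₁ : B₁ ≤ F₀) (hB₂ : B₂ ≤ F₀)
    (hF₁ : F₀ ≤ (separableClosure B₁ Ω).restrictScalars k)
    (hF₂ : F₀ ≤ (separableClosure B₂ Ω).restrictScalars k) :
    IsLeast {F | F₀ ≤ F ∧ IsGaloisOver B₁ F ∧ IsGaloisOver B₂ F}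
      (⨆ n : ℕ, altTower B₁ B₂ F₀ (n + 1)) := by
  have le_of_biGalois {F : IntermediateField k Ω} (hF : F₀ ≤ F) (h₁ : IsGaloisOver B₁ F)
      (h₂ : IsGaloisOver B₂ F) : ⨆ n, altTower B₁ B₂ F₀ (n + 1) ≤ F :=
    iSup_le fun n => altTower_le hF ((isGaloisOver_iff (hB₁.trans hF)).mp h₁).2
      ((isGaloisOver_iff (hB₂.trans hF)).mp h₂).2 (n + 1)
  have le_union : F₀ ≤ ⨆ n, altTower B₁ B₂ F₀ (n + 1) :=
    (altTower_monotone B₁ B₂ F₀ (Nat.zero_le 1)).trans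
      (le_iSup (fun n => altTower B₁ B₂ F₀ (n + 1)) 0)
  have separableClosure_eq : (separableClosure B₁ Ω).restrictScalars k =
      (separableClosure B₂ Ω).restrictScalars k :=
    (restrictScalars_separableClosure_eq hB₁ hF₁).trans
      (restrictScalars_separableClosure_eq hB₂ hF₂).symm
  have union_le : ⨆ n, altTower B₁ B₂ F₀ (n + 1) ≤ (separableClosure B₁ Ω).restrictScalars k :=
    le_of_biGalois hF₁ (isGaloisOver_separableClosure B₁)
      (separableClosure_eq ▸ isGaloisOver_separableClosure B₂)
  refine ⟨⟨le_union, ?_, ?_⟩, fun F ⟨hF, h₁, h₂⟩ => le_of_biGalois hF h₁ h₂⟩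
  · refine (isGaloisOver_iff (hB₁.trans le_union)).mpr ⟨union_le, ?_⟩
    rw [galoisClosureOver_iSup]
    exact iSup_mono' fun n => ⟨2 * (n + 1), galoisClosureOver_left_altTower_le B₁ B₂ F₀ (n + 1)⟩
  · refine (isGaloisOver_iff (hB₂.trans le_union)).mpr ⟨separableClosure_eq ▸ union_le, ?_⟩
    rw [galoisClosureOver_iSup]
    exact iSup_mono' fun n =>
      ⟨2 * (n + 1) + 1, galoisClosureOver_right_altTower_le B₁ B₂ F₀ (n + 1)⟩

/-- Corollary `Intrinsic_min_galois_both`.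
The union `E_∞` of the alternating tower of Galois closures is Galois over `P(L)` and
over `Q(K)`, and it is contained in every subfield `F` of `Ω` containing `PQ(M)` that
is Galois over both `P(L)` and `Q(K)`; i.e. `E_∞` is the minimal such subfield. -/
theorem altTower_union_minimal_biGalois
    (k M : Type*) [Field k] [Field M] [Algebra k M]
    -- `M` is a finitely generated field extension of `k` of transcendence degree 1
    (hfg : (⊤ : IntermediateField k M).FG)
    (htr : HasTrdegOne k M)
    -- the two intermediate fields `L` and `K`, with `M/L` and `M/K` finite and separable
    (L K : IntermediateField k M)
    [FiniteDimensional L M] [FiniteDimensional K M]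
    [Algebra.IsSeparable L M] [Algebra.IsSeparable K M]
    -- an algebraically closed extension `Ω` of `k` of transcendence degree 1
    (Ω : Type*) [Field Ω] [Algebra k Ω] [IsAlgClosed Ω]
    (htrΩ : HasTrdegOne k Ω)
    -- a fixed `k`-algebra embedding `PQ : M → Ω`
    (PQ : M →ₐ[k] Ω) :
    IsGaloisOver (PQ.comp L.val).fieldRange
      (⨆ n : ℕ, altTower (PQ.comp K.val).fieldRange (PQ.comp L.val).fieldRange
        PQ.fieldRange (n + 1)) ∧
    IsGaloisOver (PQ.comp K.val).fieldRange
      (⨆ n : ℕ, altTower (PQ.comp K.val).fieldRange (PQ.comp L.val).fieldRange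
        PQ.fieldRange (n + 1)) ∧
    ∀ F : IntermediateField k Ω, PQ.fieldRange ≤ F →
      IsGaloisOver (PQ.comp L.val).fieldRange F →
      IsGaloisOver (PQ.comp K.val).fieldRange F →
      (⨆ n : ℕ, altTower (PQ.comp K.val).fieldRange (PQ.comp L.val).fieldRange
        PQ.fieldRange (n + 1)) ≤ F := by
  simp only [IntermediateField.fieldRange_comp_val]
  obtain ⟨⟨-, galois_K, galois_L⟩, minimal⟩ := altTower_union_minimal_biGalois_general
    (map_le_fieldRange K PQ) (map_le_fieldRange L PQ)
    (fieldRange_le_separableClosure_map K PQ) (fieldRange_le_separableClosure_map L PQ)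
  exact ⟨galois_L, galois_K, fun F hF hL hK => minimal ⟨hF, hK, hL⟩⟩
end

section
/- Let k be a field, let (L, K, M) be a field correspondence over k, let Ω be an algebraically closed field extension of k of transcendence degree 1, and fix a k-algebra embedding PQ : M → Ω. Assume that Aut_k(F) is finite for every subfield F of Ω with PQ(M) ⊆ F and F finite over PQ(M) (the field-theoretic translation of hyperbolicity). Let G_gen be the connected component of the edge PQ in the full generic graph. Then L ∩ K has transcendence degree 0 over k (the correspondence has no core) if and only if G_gen has infinitely many edges. -/
section GenericGraph

variable {k M : Type*} [Field k] [Field M] [Algebra k M]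
  (L K : IntermediateField k M)
  {Ω : Type*} [Field Ω] [Algebra k Ω]

/-- Two edges (that is, `k`-algebra homomorphisms `M → Ω`) of the full generic graph are
incident to a common vertex: they have the same restriction to `L` (a common blue vertex)
or the same restriction to `K` (a common red vertex). -/
def EdgeStep (e e' : M →ₐ[k] Ω) : Prop :=
  e.comp L.val = e'.comp L.val ∨ e.comp K.val = e'.comp K.val

/-- The edge `e` lies in the connected component `G_gen` of the distinguished edge `PQ`
of the full generic graph. -/
def InGenericComponent (PQ e : M →ₐ[k] Ω) : Prop :=
  Relation.ReflTransGen (EdgeStep L K) PQ e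

end GenericGraph

/-!
Let `F` be the compositum in `Ω` of the images of all edges of `G_gen`.  It is separable over
`PQ(M)`, and an embedding of `F` into `Ω` fixing `PQ(L)` or `PQ(K)` only permutes the edges of
`G_gen`, so `F` is Galois over both `PQ(L)` and `PQ(K)`.  If `G_gen` is finite then `F` is finite
over `PQ(M)`, so `Aut_k(F)` is finite by hyperbolicity, and by Artin's theorem `F` is finite over
the fixed field of `Aut_k(F)`, which lies in `PQ(L) ∩ PQ(K) = PQ(L ∩ K)`.  Hence `L ∩ K` is not
algebraic over `k`, since `M` is not.

Conversely, all edges of `G_gen` agree on `L ∩ K`, and if `L ∩ K` is not algebraic over `k` then `M`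
is finite over it, which leaves only finitely many edges.
-/

open IntermediateField

section FieldTheory

theorem HasTrdegOne.trdeg_eq_one {k F : Type*} [Field k] [Field F] [Algebra k F]
    (h : HasTrdegOne k F) : Algebra.trdeg k F = 1 := by
  obtain ⟨x, hx⟩ := h
  simpa using hx.lift_cardinalMk_eq_trdeg.symm

theorem HasTrdegOne.not_isAlgebraic {k F : Type*} [Field k] [Field F] [Algebra k F]
    (h : HasTrdegOne k F) : ¬ Algebra.IsAlgebraic k F := by
  rw [← trdeg_eq_zero_iff, h.trdeg_eq_one]
  exact one_ne_zero

theorem HasTrdegOne.isAlgebraic_of_not_isAlgebraic {k F : Type*} [Field k] [Field F] [Algebra k F]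
    (h : HasTrdegOne k F) {E : IntermediateField k F} (hE : ¬ Algebra.IsAlgebraic k E) :
    Algebra.IsAlgebraic E F := by
  rw [← trdeg_eq_zero_iff] at hE ⊢
  have hadd : Algebra.trdeg k E + Algebra.trdeg E F = 1 :=
    (trdeg_add_eq k E).trans h.trdeg_eq_one
  have hE_one : Algebra.trdeg k E = 1 :=
    le_antisymm (hadd ▸ self_le_add_right _ _) (Cardinal.one_le_iff_ne_zero.2 hE)
  rw [hE_one] at hadd
  exact Cardinal.eq_of_add_eq_add_left (hadd.trans (add_zero 1).symm) Cardinal.one_lt_aleph0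

theorem map_mem_separableClosure_of_isSeparable {B N M Ω : Type*} [Field B] [Field N] [Field M]
    [Field Ω] [Algebra B Ω] [Algebra N M] {m : M} (hm : IsSeparable N m) (e : M →+* Ω)
    (he : ∀ n : N, e (algebraMap N M n) ∈ separableClosure B Ω) :
    e m ∈ separableClosure B Ω := by
  let f : N →+* separableClosure B Ω :=
    (e.comp (algebraMap N M)).codRestrict (separableClosure B Ω) he
  have hroot : Polynomial.aeval (e m) ((minpoly N m).map f) = 0 := by
    rw [Polynomial.aeval_def, Polynomial.eval₂_map,
      show (algebraMap (separableClosure B Ω) Ω).comp f = e.comp (algebraMap N M) from rfl,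
      ← Polynomial.hom_eval₂, ← Polynomial.aeval_def, minpoly.aeval, map_zero]
  have hsep : IsSeparable (separableClosure B Ω) (e m) :=
    (Polynomial.Separable.map hm).of_dvd (minpoly.dvd _ _ hroot)
  exact mem_separableClosure_iff.2 (IsSeparable.of_algebra_isSeparable_of_isSeparable B hsep)

theorem isGalois_of_forall_fieldRange_le {B Ω : Type*} [Field B] [Field Ω] [Algebra B Ω]
    [IsSepClosed Ω] (F : IntermediateField B Ω) [Algebra.IsSeparable B F]
    (h : ∀ σ : F →ₐ[B] Ω, σ.fieldRange ≤ F) : IsGalois B F := by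
  have hsplits (x : F) : ((minpoly B x).map (algebraMap B Ω)).Splits :=
    IsSepClosed.splits_codomain _ (Algebra.IsSeparable.isSeparable B x)
  have hF : normalClosure B F Ω = F := (normalClosure_le_iff.2 h).antisymm F.le_normalClosure
  have hnormal : Normal B (normalClosure B F Ω) :=
    have := Algebra.IsAlgebraic.isNormalClosure_normalClosure hsplits
    IsNormalClosure.normal (K := F)
  rw [hF] at hnormal
  exact ⟨⟩

theorem isAlgebraic_of_isGalois_of_finite_algEquiv {k M F : Type*} [Field k] [Field M] [Field F]
    [Algebra k M] [Algebra M F] [Algebra k F] [IsScalarTower k M F] (L K : IntermediateField k M)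
    [IsGalois L F] [IsGalois K F] [Finite (F ≃ₐ[k] F)] [Algebra.IsAlgebraic k ↥(L ⊓ K)] :
    Algebra.IsAlgebraic k F := by
  let F₀ : IntermediateField k F := fixedField (⊤ : Subgroup (F ≃ₐ[k] F))
  have hfixed (N : IntermediateField k M) [IsGalois N F] (x : F₀) :
      (x : F) ∈ Set.range (algebraMap N F) :=
    (InfiniteGalois.mem_range_algebraMap_iff_fixed _).2
      fun τ => x.2 ⟨τ.restrictScalars k, trivial⟩
  have hF₀ : Algebra.IsAlgebraic k F₀ := by
    refine ⟨fun x => ?_⟩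
    obtain ⟨l, hl⟩ := hfixed L x
    obtain ⟨r, hr⟩ := hfixed K x
    have hlr : (l : M) = r := (algebraMap M F).injective (hl.trans hr.symm)
    have halg : IsAlgebraic k (⟨l, l.2, hlr ▸ r.2⟩ : ↥(L ⊓ K)) := Algebra.IsAlgebraic.isAlgebraic _
    have hx : IsAlgebraic k (x : F) := hl ▸ halg.algebraMap (A := F)
    exact (isAlgebraic_algHom_iff F₀.val Subtype.val_injective).1 hx
  -- Artin: a field is finite over the fixed field of a finite group of automorphisms.
  have : FiniteDimensional F₀ F :=
    inferInstanceAs (FiniteDimensional (FixedPoints.subfield (⊤ : Subgroup (F ≃ₐ[k] F)) F) F)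
  exact Algebra.IsAlgebraic.trans k F₀ F

theorem finiteDimensional_extendScalars_fieldRange {k M Ω : Type*} [Field k] [Field M] [Field Ω]
    [Algebra k M] [Algebra M Ω] [Algebra k Ω] [IsScalarTower k M Ω] (F : IntermediateField M Ω)
    [FiniteDimensional M F]
    (h : (IsScalarTower.toAlgHom k M Ω).fieldRange ≤ F.restrictScalars k) :
    FiniteDimensional (IsScalarTower.toAlgHom k M Ω).fieldRange (extendScalars h) :=
  Module.Finite.of_equiv_equiv
    (AlgEquiv.ofInjectiveField (IsScalarTower.toAlgHom k M Ω)).toRingEquiv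
    (RingEquiv.refl F) rfl

end FieldTheory

section Component

variable {k M : Type*} [Field k] [Field M] [Algebra k M] {L K : IntermediateField k M}
  {Ω : Type*} [Field Ω] [Algebra k Ω] {PQ e : M →ₐ[k] Ω}

theorem InGenericComponent.eqOn_inf (h : InGenericComponent L K PQ e) :
    Set.EqOn PQ e ↑(L ⊓ K) := by
  intro x hx
  induction h with
  | refl => rfl
  | tail _ hstep ih =>
    refine ih.trans ?_
    rcases hstep with hL | hK
    · exact DFunLike.congr_fun hL ⟨x, hx.1⟩
    · exact DFunLike.congr_fun hK ⟨x, hx.2⟩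

theorem finite_setOf_inGenericComponent [FiniteDimensional ↥(L ⊓ K) M] (PQ : M →ₐ[k] Ω) :
    {e : M →ₐ[k] Ω | InGenericComponent L K PQ e}.Finite := by
  let : Algebra ↥(L ⊓ K) Ω := (PQ.comp (L ⊓ K).val).toRingHom.toAlgebra
  have : IsScalarTower k ↥(L ⊓ K) Ω :=
    .of_algebraMap_eq' (PQ.comp (L ⊓ K).val).comp_algebraMap.symm
  refine (Set.finite_range fun f : M →ₐ[↥(L ⊓ K)] Ω => f.restrictScalars k).subset ?_
  intro e he
  exact ⟨{ e with commutes' := fun r => (he.eqOn_inf r.2).symm }, rfl⟩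

theorem InGenericComponent.map_mem_separableClosure [Algebra.IsSeparable L M]
    [Algebra.IsSeparable K M] {B : Type*} [Field B] [Algebra B Ω]
    (h : InGenericComponent L K PQ e) (hPQ : ∀ m, PQ m ∈ separableClosure B Ω) (m : M) :
    e m ∈ separableClosure B Ω := by
  induction h generalizing m with
  | refl => exact hPQ m
  | @tail a b _ hstep ih =>
    have hb (N : IntermediateField k M) [Algebra.IsSeparable N M]
        (hN : a.comp N.val = b.comp N.val) : b m ∈ separableClosure B Ω :=
      map_mem_separableClosure_of_isSeparable (Algebra.IsSeparable.isSeparable N m) (b : M →+* Ω)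
        fun n => (DFunLike.congr_fun hN n : a n = b n) ▸ ih n
    exact hstep.elim (hb L) (hb K)

theorem InGenericComponent.comp_codRestrict {Ω' : Type*} [Field Ω'] [Algebra k Ω']
    {S : Subalgebra k Ω} (hS : ∀ e, InGenericComponent L K PQ e → ∀ m, e m ∈ S) (σ : S →ₐ[k] Ω')
    (h : InGenericComponent L K PQ e) :
    InGenericComponent L K (σ.comp (PQ.codRestrict S (hS PQ .refl)))
      (σ.comp (e.codRestrict S (hS e h))) := by
  induction h with
  | refl => exact .refl
  | tail _ hstep ih =>
    refine ih.tail (hstep.imp (fun hL => ?_) (fun hK => ?_))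
    · exact AlgHom.ext fun n => congrArg σ (Subtype.ext (DFunLike.congr_fun hL n))
    · exact AlgHom.ext fun n => congrArg σ (Subtype.ext (DFunLike.congr_fun hK n))

end Component

section ComponentField

variable {k M : Type*} [Field k] [Field M] [Algebra k M] (L K : IntermediateField k M)
  (Ω : Type*) [Field Ω] [Algebra k Ω] [Algebra M Ω] [IsScalarTower k M Ω]

/-- The compositum in `Ω` of the images of all edges of `G_gen`.  The distinguished edge is the
structure map `M → Ω`, so that the compositum is an extension of `M`, `L` and `K` at once. -/
def componentField : IntermediateField M Ω :=
  adjoin M {x | ∃ e, InGenericComponent L K (IsScalarTower.toAlgHom k M Ω) e ∧ x ∈ Set.range e}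

variable {L K Ω}

theorem InGenericComponent.map_mem_componentField {e : M →ₐ[k] Ω}
    (h : InGenericComponent L K (IsScalarTower.toAlgHom k M Ω) e) (m : M) :
    e m ∈ componentField L K Ω :=
  subset_adjoin M _ ⟨e, h, m, rfl⟩

theorem InGenericComponent.isSeparable [Algebra.IsSeparable L M] [Algebra.IsSeparable K M]
    {e : M →ₐ[k] Ω} (h : InGenericComponent L K (IsScalarTower.toAlgHom k M Ω) e) (m : M) :
    IsSeparable M (e m) :=
  h.map_mem_separableClosure (separableClosure M Ω).algebraMap_mem m

instance isSeparable_componentField [Algebra.IsSeparable L M] [Algebra.IsSeparable K M] :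
    Algebra.IsSeparable M (componentField L K Ω) := by
  refine (isSeparable_adjoin_iff_isSeparable M Ω).2 ?_
  rintro _ ⟨e, he, m, rfl⟩
  exact he.isSeparable m

theorem finiteDimensional_componentField [Algebra.IsSeparable L M] [Algebra.IsSeparable K M]
    (hfg : (⊤ : IntermediateField k M).FG)
    (hfin : {e | InGenericComponent L K (IsScalarTower.toAlgHom k M Ω) e}.Finite) :
    FiniteDimensional M (componentField L K Ω) := by
  obtain ⟨T, hT⟩ := hfg
  let S : Set Ω :=
    ⋃ e ∈ {e | InGenericComponent L K (IsScalarTower.toAlgHom k M Ω) e}, e '' (T : Set M)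
  have hS : S.Finite := hfin.biUnion fun e _ => T.finite_toSet.image e
  have hle : componentField L K Ω ≤ adjoin M S := by
    refine adjoin_le_iff.2 ?_
    rintro _ ⟨e, he, m, rfl⟩
    have hTe : adjoin k (T : Set M) ≤ ((adjoin M S).restrictScalars k).comap e :=
      adjoin_le_iff.2 fun t ht =>
        subset_adjoin M S (Set.mem_biUnion he (Set.mem_image_of_mem e ht))
    exact hTe (hT ▸ mem_top)
  have hint : ∀ x ∈ S, IsIntegral M x := by
    simp only [S, Set.mem_iUnion₂]
    rintro _ ⟨e, he, m, -, rfl⟩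
    exact (he.isSeparable m).isIntegral
  have := hS.to_subtype
  have : FiniteDimensional M (adjoin M S) := finiteDimensional_adjoin hint
  exact .of_injective (inclusion hle).toLinearMap (inclusion_injective hle)

theorem algHom_apply_mem_componentField (N : IntermediateField k M)
    (hN : ∀ e e' : M →ₐ[k] Ω, e.comp N.val = e'.comp N.val → EdgeStep L K e e')
    (σ : componentField L K Ω →ₐ[N] Ω) (x : componentField L K Ω) :
    σ x ∈ componentField L K Ω := by
  have hedge {e : M →ₐ[k] Ω} (he : InGenericComponent L K (IsScalarTower.toAlgHom k M Ω) e)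
      (m : M) : σ ⟨e m, he.map_mem_componentField m⟩ ∈ componentField L K Ω := by
    -- `σ` carries a path from `PQ` to `e` to one from `σ ∘ PQ` to `σ ∘ e`, and the edges `PQ` and
    -- `σ ∘ PQ` share a vertex because `σ` fixes `N`.
    let S : Subalgebra k Ω := ((componentField L K Ω).restrictScalars k).toSubalgebra
    let τ : S →ₐ[k] Ω := σ.restrictScalars k
    have hS (e : M →ₐ[k] Ω) (h : InGenericComponent L K (IsScalarTower.toAlgHom k M Ω) e) (m : M) :
        e m ∈ S := h.map_mem_componentField m
    have hτPQ : EdgeStep L K (IsScalarTower.toAlgHom k M Ω)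
        (τ.comp ((IsScalarTower.toAlgHom k M Ω).codRestrict S (hS _ .refl))) :=
      hN _ _ (AlgHom.ext fun n => (σ.commutes n).symm)
    exact InGenericComponent.map_mem_componentField ((he.comp_codRestrict hS τ).head hτPQ) m
  obtain ⟨x, hx⟩ := x
  induction hx using adjoin_induction with
  | mem _ h => obtain ⟨e, he, m, rfl⟩ := h; exact hedge he m
  | algebraMap m => exact hedge .refl m
  | add x y hx hy ihx ihy =>
    exact Set.mem_of_eq_of_mem (map_add σ ⟨x, hx⟩ ⟨y, hy⟩) (add_mem ihx ihy)
  | inv x hx ihx => exact Set.mem_of_eq_of_mem (map_inv₀ σ ⟨x, hx⟩) (inv_mem ihx)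
  | mul x y hx hy ihx ihy =>
    exact Set.mem_of_eq_of_mem (map_mul σ ⟨x, hx⟩ ⟨y, hy⟩) (mul_mem ihx ihy)

theorem isGalois_componentField [IsSepClosed Ω] [Algebra.IsSeparable L M] [Algebra.IsSeparable K M]
    (N : IntermediateField k M) [Algebra.IsSeparable N M]
    (hN : ∀ e e' : M →ₐ[k] Ω, e.comp N.val = e'.comp N.val → EdgeStep L K e e') :
    IsGalois N (componentField L K Ω) := by
  have : Algebra.IsSeparable N ((componentField L K Ω).restrictScalars N) :=
    Algebra.IsSeparable.trans N M (componentField L K Ω)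
  refine isGalois_of_forall_fieldRange_le ((componentField L K Ω).restrictScalars N) ?_
  rintro σ _ ⟨x, rfl⟩
  exact algHom_apply_mem_componentField N hN σ x

end ComponentField

theorem no_core_iff_infinitely_many_edges_general
    {k M : Type*} [Field k] [Field M] [Algebra k M]
    (hfg : (⊤ : IntermediateField k M).FG) (htr : HasTrdegOne k M)
    {L K : IntermediateField k M} [Algebra.IsSeparable L M] [Algebra.IsSeparable K M]
    {Ω : Type*} [Field Ω] [Algebra k Ω] [IsSepClosed Ω] (PQ : M →ₐ[k] Ω)
    (hhyp : ∀ (F : IntermediateField k Ω) (h : PQ.fieldRange ≤ F),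
      FiniteDimensional PQ.fieldRange (extendScalars h) → Finite (F ≃ₐ[k] F)) :
    Algebra.IsAlgebraic k ↥(L ⊓ K) ↔ {e : M →ₐ[k] Ω | InGenericComponent L K PQ e}.Infinite := by
  constructor
  · intro halg hfin
    let : Algebra M Ω := PQ.toRingHom.toAlgebra
    have : IsScalarTower k M Ω := .of_algebraMap_eq' PQ.comp_algebraMap.symm
    let F := componentField L K Ω
    have : FiniteDimensional M F := finiteDimensional_componentField hfg hfin
    have hPQ : PQ.fieldRange ≤ F.restrictScalars k := by
      rintro _ ⟨m, rfl⟩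
      exact F.algebraMap_mem m
    have : Finite (F ≃ₐ[k] F) := hhyp _ hPQ (finiteDimensional_extendScalars_fieldRange F hPQ)
    have : IsGalois L F := isGalois_componentField L fun _ _ => Or.inl
    have : IsGalois K F := isGalois_componentField K fun _ _ => Or.inr
    have : Algebra.IsAlgebraic k F := isAlgebraic_of_isGalois_of_finite_algEquiv L K
    exact htr.not_isAlgebraic (Algebra.IsAlgebraic.tower_bot k M F)
  · intro hinf
    by_contra hna
    have : Algebra.IsAlgebraic ↥(L ⊓ K) M := htr.isAlgebraic_of_not_isAlgebraic hna
    have : Algebra.EssFiniteType k M := fg_top_iff.1 hfg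
    have : Algebra.EssFiniteType ↥(L ⊓ K) M := .of_comp k _ _
    have : FiniteDimensional ↥(L ⊓ K) M := Algebra.finite_of_essFiniteType_of_isAlgebraic
    exact hinf (finite_setOf_inGenericComponent PQ)

/-- Proposition `no_core_infinite_graph`.
Assume every subfield of `Ω` finite over `PQ(M)` has finite `k`-automorphism group
(the field-theoretic translation of hyperbolicity).  Then the correspondence has no core
(`L ∩ K` has transcendence degree `0`, i.e. is algebraic over `k`) if and only if the
connected component `G_gen` of the distinguished edge `PQ` in the full generic graph has
infinitely many edges. -/
theorem no_core_iff_infinitely_many_edges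
    (k M : Type*) [Field k] [Field M] [Algebra k M]
    -- `M` is a finitely generated field extension of `k` of transcendence degree 1
    (hfg : (⊤ : IntermediateField k M).FG)
    (htr : HasTrdegOne k M)
    -- the two intermediate fields `L` and `K`, with `M/L` and `M/K` finite and separable
    (L K : IntermediateField k M)
    [FiniteDimensional L M] [FiniteDimensional K M]
    [Algebra.IsSeparable L M] [Algebra.IsSeparable K M]
    -- an algebraically closed extension `Ω` of `k` of transcendence degree 1
    (Ω : Type*) [Field Ω] [Algebra k Ω] [IsAlgClosed Ω]
    (htrΩ : HasTrdegOne k Ω)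
    -- a fixed `k`-algebra embedding `PQ : M → Ω`
    (PQ : M →ₐ[k] Ω)
    -- hyperbolicity: every subfield of `Ω` finite over `PQ(M)` has finite
    -- `k`-automorphism group
    (hhyp : ∀ (F : IntermediateField k Ω) (h : PQ.fieldRange ≤ F),
      FiniteDimensional PQ.fieldRange (IntermediateField.extendScalars h) →
      Finite (F ≃ₐ[k] F)) :
    Algebra.IsAlgebraic k ↥(L ⊓ K) ↔
      {e : M →ₐ[k] Ω | InGenericComponent L K PQ e}.Infinite :=
  no_core_iff_infinitely_many_edges_general hfg htr PQ hhyp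
end
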